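/- For every a > 0, the function T_a is integrable on ℝ and its Fourier transform satisfies ∫_{−∞}^{∞} T_a(x)·e^{iξx} dx = −π/(|ξ| + a) for every real ξ. -/

import Mathlib

open Filter MeasureTheory Topology

/-- The sine integral `si(x) = -∫_x^∞ sin t / t dt`, defined via the improper
(limit of interval integrals) form. -/
noncomputable def si (x : ℝ) : ℝ :=
  - limUnder Filter.atTop (fun R : ℝ => ∫ t in x..R, Real.sin t / t)

/-- The cosine integral `ci(x) = -∫_x^∞ cos t / t dt`, defined via the improper
(limit of interval integrals) form. -/
noncomputable def ci (x : ℝ) : ℝ :=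
  - limUnder Filter.atTop (fun R : ℝ => ∫ t in x..R, Real.cos t / t)

/-- The kernel `S_a(x) = sign(x) (si(a|x|) cos(a|x|) - ci(a|x|) sin(a|x|))`, with `S_a(0)=0`. -/
noncomputable def Sker (a x : ℝ) : ℝ :=
  Real.sign x * (si (a * |x|) * Real.cos (a * |x|) - ci (a * |x|) * Real.sin (a * |x|))

/-- The kernel `T_a(x) = si(a|x|) sin(a|x|) + ci(a|x|) cos(a|x|)`. -/
noncomputable def Tker (a x : ℝ) : ℝ :=
  si (a * |x|) * Real.sin (a * |x|) + ci (a * |x|) * Real.cos (a * |x|)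

/-!
The function `E(x) = ∫₀^∞ e^{-xs} / (s - i) ds` satisfies `E' = -(1/x + i E)`, that is
`(e^{ix} E)' = -e^{ix} / x`, and vanishes at infinity; hence `ci + i si = -e^{ix} E` and
`T_a(x) = -Re E(a|x|)`. Rescaling `s` by `|x|` turns this into a superposition of half-plane Poisson
kernels, `T_a(x) = -∫₀^∞ y / (x² + y²) e^{-ay} dy`. The Fourier transform of `y / (x² + y²)` at `ξ`
is `π e^{-y|ξ|}`, so by Fubini that of `T_a` is `-π` times the Laplace transform of `e^{-ay}` at
`|ξ|`, which is `1 / (|ξ| + a)`.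
-/

section LaplaceTransform

open Set

variable {E : Type*} [NormedAddCommGroup E] [NormedSpace ℝ E] {f g h : ℝ → E} {x y C : ℝ}

/-- Absolute convergence at `x` of the integral defining `laplaceTransform h`. -/
def LaplaceConvergent (h : ℝ → E) (x : ℝ) : Prop :=
  IntegrableOn (fun s => Real.exp (-x * s) • h s) (Ioi 0)

/-- The one-sided Laplace transform `x ↦ ∫₀^∞ e^{-xs} h(s) ds`, at real arguments only. -/
noncomputable def laplaceTransform (h : ℝ → E) (x : ℝ) : E :=
  ∫ s in Ioi (0 : ℝ), Real.exp (-x * s) • h s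

theorem exp_smul_exp_smul_eq (h : ℝ → E) (x y s : ℝ) :
    Real.exp (-(y - x) * s) • Real.exp (-x * s) • h s = Real.exp (-y * s) • h s := by
  rw [smul_smul, ← Real.exp_add]
  ring_nf

theorem LaplaceConvergent.aestronglyMeasurable_exp_smul (hx : LaplaceConvergent h x) (y : ℝ) :
    AEStronglyMeasurable (fun s => Real.exp (-y * s) • h s) (volume.restrict (Ioi 0)) := by
  simp_rw [← exp_smul_exp_smul_eq h x y]
  exact AEStronglyMeasurable.smul (by fun_prop) hx.aestronglyMeasurable

theorem norm_exp_smul_le_of_le (h : ℝ → E) (hxy : x ≤ y) {s : ℝ} (hs : 0 ≤ s) :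
    ‖Real.exp (-y * s) • h s‖ ≤ ‖Real.exp (-x * s) • h s‖ := by
  rw [norm_smul, norm_smul, Real.norm_eq_abs, Real.norm_eq_abs, Real.abs_exp, Real.abs_exp]
  gcongr

theorem LaplaceConvergent.mono (hx : LaplaceConvergent h x) (hxy : x ≤ y) :
    LaplaceConvergent h y :=
  Integrable.mono hx (hx.aestronglyMeasurable_exp_smul y) <| by
    filter_upwards [ae_restrict_mem measurableSet_Ioi] with s hs
    exact norm_exp_smul_le_of_le h hxy (le_of_lt hs)

theorem laplaceConvergent_of_norm_le (hm : AEStronglyMeasurable h (volume.restrict (Ioi 0)))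
    (hC : ∀ s, 0 < s → ‖h s‖ ≤ C) (hx : 0 < x) : LaplaceConvergent h x :=
  (integrableOn_exp_mul_Ioi (neg_lt_zero.mpr hx) 0).smul_bdd C hm <| by
    filter_upwards [ae_restrict_mem measurableSet_Ioi] with s hs using hC s hs

theorem laplaceTransform_add (hf : LaplaceConvergent f x) (hg : LaplaceConvergent g x) :
    laplaceTransform (fun s => f s + g s) x = laplaceTransform f x + laplaceTransform g x := by
  simp only [laplaceTransform, smul_add]
  exact integral_add hf hg

section ConstSMul

variable {𝕜 : Type*} [NormedField 𝕜] [NormedSpace 𝕜 E] [SMulCommClass ℝ 𝕜 E]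

theorem LaplaceConvergent.const_smul (hx : LaplaceConvergent h x) (c : 𝕜) :
    LaplaceConvergent (fun s => c • h s) x := by
  simp only [LaplaceConvergent, smul_comm _ c]
  exact Integrable.smul c hx

theorem laplaceTransform_const_smul (c : 𝕜) (h : ℝ → E) (x : ℝ) :
    laplaceTransform (fun s => c • h s) x = c • laplaceTransform h x := by
  simp only [laplaceTransform, smul_comm _ c, integral_smul]

end ConstSMul

theorem LaplaceConvergent.tendsto_laplaceTransform_atTop (hx : LaplaceConvergent h x) :
    Tendsto (laplaceTransform h) atTop (𝓝 0) := by
  rw [← integral_zero ℝ E (μ := volume.restrict (Ioi 0))]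
  refine tendsto_integral_filter_of_dominated_convergence
    (fun s => ‖Real.exp (-x * s) • h s‖) (Eventually.of_forall hx.aestronglyMeasurable_exp_smul)
    ?_ hx.norm ?_
  · filter_upwards [eventually_ge_atTop x] with y hxy
    filter_upwards [ae_restrict_mem measurableSet_Ioi] with s hs
    exact norm_exp_smul_le_of_le h hxy (le_of_lt hs)
  · filter_upwards [ae_restrict_mem measurableSet_Ioi] with s hs
    have hexp : Tendsto (fun y : ℝ => Real.exp (-y * s)) atTop (𝓝 0) :=
      Real.tendsto_exp_atBot.comp (tendsto_neg_atTop_atBot.atBot_mul_const hs)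
    simpa using hexp.smul_const (h s)

theorem mul_exp_neg_mul_le_inv {c : ℝ} (hc : 0 < c) (s : ℝ) : s * Real.exp (-c * s) ≤ c⁻¹ := by
  rw [neg_mul, Real.exp_neg, mul_inv_le_iff₀ (Real.exp_pos _), ← div_eq_inv_mul, le_div_iff₀ hc,
    mul_comm]
  linarith [Real.add_one_le_exp (c * s)]

theorem LaplaceConvergent.hasDerivAt_laplaceTransform (hx : LaplaceConvergent h x) (hxy : x < y) :
    HasDerivAt (laplaceTransform h) (-laplaceTransform (fun s => s • h s) y) y := by
  obtain ⟨z, hxz, hzy⟩ := exists_between hxy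
  -- The gap between `x` and `z` absorbs the factor `s` that differentiation brings down.
  have hbound : ∀ {u s : ℝ}, z < u → 0 < s → ‖-(Real.exp (-u * s) • s • h s)‖ ≤
      (z - x)⁻¹ * ‖Real.exp (-x * s) • h s‖ := fun {u s} hu hs => by
    calc ‖-(Real.exp (-u * s) • s • h s)‖
        = s * ‖Real.exp (-u * s) • h s‖ := by
          rw [norm_neg, smul_comm, norm_smul, Real.norm_of_nonneg hs.le]
      _ ≤ s * ‖Real.exp (-z * s) • h s‖ :=
          mul_le_mul_of_nonneg_left (norm_exp_smul_le_of_le h hu.le hs.le) hs.le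
      _ = s * Real.exp (-(z - x) * s) * ‖Real.exp (-x * s) • h s‖ := by
          rw [← exp_smul_exp_smul_eq h x z, norm_smul, Real.norm_eq_abs, Real.abs_exp, mul_assoc]
      _ ≤ (z - x)⁻¹ * ‖Real.exp (-x * s) • h s‖ := by
          gcongr
          exact mul_exp_neg_mul_le_inv (sub_pos.mpr hxz) s
  have hmeas : AEStronglyMeasurable (fun s => -(Real.exp (-y * s) • s • h s))
      (volume.restrict (Ioi 0)) := by
    simp_rw [smul_comm (Real.exp _)]
    exact (continuous_id.aestronglyMeasurable.smul (hx.aestronglyMeasurable_exp_smul y)).neg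
  have hderiv := (hasDerivAt_integral_of_dominated_loc_of_deriv_le
    (F := fun u s => Real.exp (-u * s) • h s) (F' := fun u s => -(Real.exp (-u * s) • s • h s))
    (Ioi_mem_nhds hzy) (Eventually.of_forall hx.aestronglyMeasurable_exp_smul)
    (hx.mono hxy.le) hmeas
    (by filter_upwards [ae_restrict_mem measurableSet_Ioi] with s hs u hu using hbound hu hs)
    (hx.norm.const_mul _) (ae_of_all _ fun s u _ => ?_)).2
  · rwa [integral_neg] at hderiv
  · refine (((hasDerivAt_neg u).mul_const s).exp.smul_const (h s)).congr_deriv ?_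
    rw [neg_one_mul, mul_neg, neg_smul, mul_smul]

theorem laplaceTransform_const [CompleteSpace E] (c : E) (hx : 0 < x) :
    laplaceTransform (fun _ => c) x = x⁻¹ • c := by
  rw [laplaceTransform, integral_smul_const, integral_exp_mul_Ioi (neg_lt_zero.mpr hx)]
  simp

theorem laplaceTransform_exp_neg_mul_smul (h : ℝ → E) (a x : ℝ) :
    laplaceTransform (fun s => Real.exp (-a * s) • h s) x = laplaceTransform h (x + a) := by
  simp only [laplaceTransform]
  congr 1 with s
  rw [← exp_smul_exp_smul_eq h a (x + a), add_sub_cancel_right]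

end LaplaceTransform

section SinCosIntegral

open Set Complex

theorem tendsto_intervalIntegral_atTop_of_hasDerivAt {E : Type*} [NormedAddCommGroup E]
    [NormedSpace ℝ E] [CompleteSpace E] {f f' : ℝ → E} {a : ℝ} {m : E}
    (hf : ∀ x ∈ Ici a, HasDerivAt f (f' x) x) (hf' : ContinuousOn f' (Ici a))
    (hlim : Tendsto f atTop (𝓝 m)) :
    Tendsto (fun R => ∫ t in a..R, f' t) atTop (𝓝 (m - f a)) := by
  refine (hlim.sub_const (f a)).congr' ?_
  filter_upwards [eventually_ge_atTop a] with R hR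
  have hsub : uIcc a R ⊆ Ici a := uIcc_of_le hR ▸ Icc_subset_Ici_self
  exact (intervalIntegral.integral_eq_sub_of_hasDerivAt (fun t ht => hf t (hsub ht))
    (hf'.mono hsub).intervalIntegrable).symm

/-- The combination `g + i f` of the auxiliary functions
`f(x) = ∫₀^∞ e^{-xs}/(1 + s²) ds` and `g(x) = ∫₀^∞ s e^{-xs}/(1 + s²) ds` of the sine and cosine
integrals. -/
noncomputable def sinCosIntegralAux : ℝ → ℂ :=
  laplaceTransform fun s => ((s : ℂ) - I)⁻¹

theorem ofReal_sub_I_ne_zero (s : ℝ) : (s : ℂ) - I ≠ 0 := fun h => by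
  simpa using congrArg im h

theorem norm_inv_ofReal_sub_I_le_one (s : ℝ) : ‖((s : ℂ) - I)⁻¹‖ ≤ 1 := by
  rw [norm_inv]
  exact inv_le_one_of_one_le₀ (by simpa using abs_im_le_norm ((s : ℂ) - I))

theorem laplaceConvergent_inv_ofReal_sub_I {x : ℝ} (hx : 0 < x) :
    LaplaceConvergent (fun s : ℝ => ((s : ℂ) - I)⁻¹) x :=
  laplaceConvergent_of_norm_le (by fun_prop) (fun s _ => norm_inv_ofReal_sub_I_le_one s) hx

theorem tendsto_sinCosIntegralAux_atTop : Tendsto sinCosIntegralAux atTop (𝓝 0) :=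
  (laplaceConvergent_inv_ofReal_sub_I one_pos).tendsto_laplaceTransform_atTop

theorem hasDerivAt_sinCosIntegralAux {x : ℝ} (hx : 0 < x) :
    HasDerivAt sinCosIntegralAux (-((x : ℂ)⁻¹ + I * sinCosIntegralAux x)) x := by
  have hsplit (s : ℝ) : s • ((s : ℂ) - I)⁻¹ = 1 + I * ((s : ℂ) - I)⁻¹ := by
    have := ofReal_sub_I_ne_zero s
    rw [real_smul]
    field_simp
    ring
  have hconst : LaplaceConvergent (fun _ => (1 : ℂ)) x :=
    laplaceConvergent_of_norm_le (by fun_prop) (fun _ _ => norm_one.le) hx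
  have htransform : laplaceTransform (fun s : ℝ => s • ((s : ℂ) - I)⁻¹) x =
      (x : ℂ)⁻¹ + I * sinCosIntegralAux x := by
    simp only [hsplit, ← smul_eq_mul I]
    rw [laplaceTransform_add hconst ((laplaceConvergent_inv_ofReal_sub_I hx).const_smul I),
      laplaceTransform_const 1 hx, laplaceTransform_const_smul, real_smul, mul_one, ofReal_inv,
      sinCosIntegralAux]
  rw [← htransform]
  exact (laplaceConvergent_inv_ofReal_sub_I (half_pos hx)).hasDerivAt_laplaceTransform
    (half_lt_self hx)

theorem hasDerivAt_exp_I_mul_sinCosIntegralAux {x : ℝ} (hx : 0 < x) :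
    HasDerivAt (fun t : ℝ => exp (I * t) * sinCosIntegralAux t) (-(exp (I * x) / x)) x := by
  refine ((((hasDerivAt_id x).ofReal_comp.const_mul I).cexp).mul
    (hasDerivAt_sinCosIntegralAux hx)).congr_deriv ?_
  simp only [id, ofReal_one]
  ring

theorem continuousOn_exp_I_mul_div :
    ContinuousOn (fun t : ℝ => exp (I * t) / t) (Ioi 0) :=
  ContinuousOn.div (by fun_prop) (by fun_prop) fun _ ht => ofReal_ne_zero.mpr (ne_of_gt ht)

theorem intervalIntegrable_exp_I_mul_div {x y : ℝ} (hx : 0 < x) (hy : 0 < y) :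
    IntervalIntegrable (fun t : ℝ => exp (I * t) / t) volume x y :=
  (continuousOn_exp_I_mul_div.mono
    fun _ ht => (lt_min hx hy).trans_le ht.1).intervalIntegrable

theorem tendsto_integral_exp_I_mul_div {x : ℝ} (hx : 0 < x) :
    Tendsto (fun R : ℝ => ∫ t in x..R, exp (I * t) / t) atTop
      (𝓝 (exp (I * x) * sinCosIntegralAux x)) := by
  have hlim : Tendsto (fun t : ℝ => -(exp (I * t) * sinCosIntegralAux t)) atTop (𝓝 0) := by
    refine tendsto_zero_iff_norm_tendsto_zero.mpr ?_
    simpa [norm_exp_I_mul_ofReal] using tendsto_sinCosIntegralAux_atTop.norm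
  simpa using tendsto_intervalIntegral_atTop_of_hasDerivAt
    (fun t ht => by simpa using (hasDerivAt_exp_I_mul_sinCosIntegralAux (hx.trans_le ht)).fun_neg)
    (continuousOn_exp_I_mul_div.mono fun _ ht => hx.trans_le ht) hlim

theorem ci_eq_neg_re_exp_mul_sinCosIntegralAux {x : ℝ} (hx : 0 < x) :
    ci x = -(exp (I * x) * sinCosIntegralAux x).re := by
  rw [ci, neg_inj]
  refine (((continuous_re.tendsto _).comp (tendsto_integral_exp_I_mul_div hx)).congr'
    ?_).limUnder_eq
  filter_upwards [eventually_gt_atTop 0] with R hR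
  refine (intervalIntegral.intervalIntegral_re (intervalIntegrable_exp_I_mul_div hx hR)).symm.trans
    ?_
  simp [div_ofReal_re, exp_re]

theorem si_eq_neg_im_exp_mul_sinCosIntegralAux {x : ℝ} (hx : 0 < x) :
    si x = -(exp (I * x) * sinCosIntegralAux x).im := by
  rw [si, neg_inj]
  refine (((continuous_im.tendsto _).comp (tendsto_integral_exp_I_mul_div hx)).congr'
    ?_).limUnder_eq
  filter_upwards [eventually_gt_atTop 0] with R hR
  refine (intervalIntegral.intervalIntegral_im (intervalIntegrable_exp_I_mul_div hx hR)).symm.trans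
    ?_
  simp [div_ofReal_im, exp_im]

theorem Tker_eq_neg_re_sinCosIntegralAux {a x : ℝ} (ha : 0 < a) (hx : x ≠ 0) :
    Tker a x = -(sinCosIntegralAux (a * |x|)).re := by
  have hpos : 0 < a * |x| := mul_pos ha (abs_pos.mpr hx)
  have hre (θ : ℝ) : (exp (I * θ)).re = Real.cos θ := by simp [exp_re]
  have him (θ : ℝ) : (exp (I * θ)).im = Real.sin θ := by simp [exp_im]
  rw [Tker, si_eq_neg_im_exp_mul_sinCosIntegralAux hpos,
    ci_eq_neg_re_exp_mul_sinCosIntegralAux hpos, mul_re, mul_im, hre, him]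
  linear_combination
    (-(sinCosIntegralAux (a * |x|)).re) * Real.sin_sq_add_cos_sq (a * |x|)

end SinCosIntegral

section PoissonKernel

open scoped NNReal

/-- The Poisson kernel of the upper half-plane at height `y` and abscissa `x`, without the
customary factor `1/π`. -/
noncomputable def halfPlanePoissonKernel (y x : ℝ) : ℝ :=
  y / (x ^ 2 + y ^ 2)

theorem halfPlanePoissonKernel_nonneg {y : ℝ} (hy : 0 ≤ y) (x : ℝ) :
    0 ≤ halfPlanePoissonKernel y x := by
  rw [halfPlanePoissonKernel]
  positivity

theorem halfPlanePoissonKernel_mul_mul {c : ℝ} (hc : c ≠ 0) (y x : ℝ) :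
    halfPlanePoissonKernel (c * y) (c * x) = c⁻¹ * halfPlanePoissonKernel y x := by
  rw [halfPlanePoissonKernel, halfPlanePoissonKernel, mul_pow, mul_pow, ← mul_add, sq c,
    mul_assoc c, mul_div_mul_left _ _ hc, ← div_div, inv_mul_eq_div, div_right_comm]

theorem halfPlanePoissonKernel_abs (y x : ℝ) :
    halfPlanePoissonKernel y |x| = halfPlanePoissonKernel y x := by
  rw [halfPlanePoissonKernel, halfPlanePoissonKernel, sq_abs]

theorem halfPlanePoissonKernel_eq_pi_mul_cauchyPDFReal (y : ℝ≥0) (x : ℝ) :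
    halfPlanePoissonKernel y x = Real.pi * ProbabilityTheory.cauchyPDFReal 0 y x := by
  rw [halfPlanePoissonKernel, ProbabilityTheory.cauchyPDFReal_def, sub_zero, mul_assoc,
    mul_inv_cancel_left₀ Real.pi_ne_zero, div_eq_mul_inv]

theorem integrable_halfPlanePoissonKernel {y : ℝ} (hy : 0 ≤ y) :
    Integrable (halfPlanePoissonKernel y) := by
  lift y to ℝ≥0 using hy
  simp only [funext (halfPlanePoissonKernel_eq_pi_mul_cauchyPDFReal y)]
  exact (ProbabilityTheory.integrable_cauchyPDFReal 0).const_mul Real.pi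

theorem integral_halfPlanePoissonKernel {y : ℝ} (hy : 0 < y) :
    ∫ x, halfPlanePoissonKernel y x = Real.pi := by
  lift y to ℝ≥0 using hy.le
  simp only [halfPlanePoissonKernel_eq_pi_mul_cauchyPDFReal, integral_const_mul,
    ProbabilityTheory.integral_cauchyPDFReal_eq_one 0 (NNReal.coe_ne_zero.mp hy.ne'), mul_one]

end PoissonKernel

section TwoSidedExponential

open Set Complex

variable {b z : ℂ}

theorem eqOn_exp_mul_abs_add_mul_Ioi (b z : ℂ) :
    EqOn (fun x : ℝ => exp (-b * (|x| : ℝ) + z * x)) (fun x : ℝ => exp ((z - b) * x)) (Ioi 0) :=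
  fun x hx => by
    simp only [abs_of_pos (mem_Ioi.mp hx)]
    ring_nf

theorem eqOn_exp_mul_abs_add_mul_Iic (b z : ℂ) :
    EqOn (fun x : ℝ => exp (-b * (|x| : ℝ) + z * x)) (fun x : ℝ => exp ((z + b) * x)) (Iic 0) :=
  fun x hx => by
    simp only [abs_of_nonpos (mem_Iic.mp hx), ofReal_neg]
    ring_nf

theorem integrableOn_exp_mul_abs_add_mul_Ioi (hz : z.re < b.re) :
    IntegrableOn (fun x : ℝ => exp (-b * (|x| : ℝ) + z * x)) (Ioi 0) :=
  (integrableOn_exp_mul_complex_Ioi (a := z - b) (by simpa using hz) 0).congr_fun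
    (eqOn_exp_mul_abs_add_mul_Ioi b z).symm measurableSet_Ioi

theorem integrableOn_exp_mul_abs_add_mul_Iic (hz : -b.re < z.re) :
    IntegrableOn (fun x : ℝ => exp (-b * (|x| : ℝ) + z * x)) (Iic 0) :=
  (integrableOn_exp_mul_complex_Iic (a := z + b) (by rw [add_re]; linarith) 0).congr_fun
    (eqOn_exp_mul_abs_add_mul_Iic b z).symm measurableSet_Iic

theorem integrable_exp_mul_abs_add_mul (hz : |z.re| < b.re) :
    Integrable (fun x : ℝ => exp (-b * (|x| : ℝ) + z * x)) := by
  rw [← integrableOn_univ, ← Iic_union_Ioi (a := (0 : ℝ))]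
  exact (integrableOn_exp_mul_abs_add_mul_Iic (abs_lt.mp hz).1).union
    (integrableOn_exp_mul_abs_add_mul_Ioi (abs_lt.mp hz).2)

theorem integral_exp_mul_abs_add_mul (hz : |z.re| < b.re) :
    ∫ x : ℝ, exp (-b * (|x| : ℝ) + z * x) = 2 * b / (b ^ 2 - z ^ 2) := by
  obtain ⟨hz₁, hz₂⟩ := abs_lt.mp hz
  have hsub : (z - b).re < 0 := by simpa using hz₂
  have hadd : 0 < (z + b).re := by rw [add_re]; linarith
  have hsub_ne : z - b ≠ 0 := fun h => hsub.ne (by rw [h, zero_re])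
  have hadd_ne : z + b ≠ 0 := fun h => hadd.ne' (by rw [h, zero_re])
  have hsq_ne : b ^ 2 - z ^ 2 ≠ 0 := by
    rw [show b ^ 2 - z ^ 2 = -((z - b) * (z + b)) by ring]
    exact neg_ne_zero.mpr (mul_ne_zero hsub_ne hadd_ne)
  rw [← intervalIntegral.integral_Iic_add_Ioi (integrableOn_exp_mul_abs_add_mul_Iic hz₁)
      (integrableOn_exp_mul_abs_add_mul_Ioi hz₂),
    setIntegral_congr_fun measurableSet_Iic (eqOn_exp_mul_abs_add_mul_Iic b z),
    setIntegral_congr_fun measurableSet_Ioi (eqOn_exp_mul_abs_add_mul_Ioi b z),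
    integral_exp_mul_complex_Iic hadd, integral_exp_mul_complex_Ioi hsub, ofReal_zero, mul_zero,
    mul_zero, exp_zero]
  field_simp
  ring

end TwoSidedExponential

section PoissonKernelFourier

open Set Complex
open scoped FourierTransform

theorem fourier_exp_neg_mul_abs {y : ℝ} (hy : 0 < y) (x : ℝ) :
    𝓕 (fun v : ℝ => exp (-(2 * Real.pi * y : ℝ) * (|v| : ℝ))) x =
      ((Real.pi⁻¹ * halfPlanePoissonKernel y x : ℝ) : ℂ) := by
  have hre : |((-2 * Real.pi * x : ℝ) * I : ℂ).re| < ((2 * Real.pi * y : ℝ) : ℂ).re := by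
    rw [re_ofReal_mul, I_re, mul_zero, abs_zero, ofReal_re]
    positivity
  have hsq : ((2 * Real.pi * y : ℝ) : ℂ) ^ 2 - ((-2 * Real.pi * x : ℝ) * I) ^ 2 =
      ((2 * Real.pi) ^ 2 * (x ^ 2 + y ^ 2) : ℝ) := by
    rw [mul_pow, I_sq]
    push_cast
    ring
  calc 𝓕 (fun v : ℝ => exp (-(2 * Real.pi * y : ℝ) * (|v| : ℝ))) x
      = ∫ v : ℝ, exp (-(2 * Real.pi * y : ℝ) * (|v| : ℝ) + (-2 * Real.pi * x : ℝ) * I * v) := by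
        rw [Real.fourier_real_eq_integral_exp_smul]
        congr 1 with v
        rw [smul_eq_mul, ← exp_add, add_comm]
        push_cast
        ring_nf
    _ = 2 * (2 * Real.pi * y : ℝ) / ((2 * Real.pi) ^ 2 * (x ^ 2 + y ^ 2) : ℝ) := by
        rw [integral_exp_mul_abs_add_mul hre, hsq]
    _ = ((Real.pi⁻¹ * halfPlanePoissonKernel y x : ℝ) : ℂ) := by
        rw [halfPlanePoissonKernel]
        norm_cast
        have := Real.pi_ne_zero
        field_simp

theorem integral_exp_mul_halfPlanePoissonKernel {y : ℝ} (hy : 0 < y) (ξ : ℝ) :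
    ∫ x : ℝ, exp (I * ξ * x) * halfPlanePoissonKernel y x =
      ((Real.pi * Real.exp (-|ξ| * y) : ℝ) : ℂ) := by
  set f : ℝ → ℂ := fun v => exp (-(2 * Real.pi * y : ℝ) * (|v| : ℝ)) with hf
  have hf_int : Integrable f := by
    simpa only [zero_mul, add_zero] using integrable_exp_mul_abs_add_mul (z := 0)
      (b := (2 * Real.pi * y : ℝ)) (by rw [zero_re, abs_zero, ofReal_re]; positivity)
  have hfourier : 𝓕 f = fun x => ((Real.pi⁻¹ * halfPlanePoissonKernel y x : ℝ) : ℂ) :=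
    funext (fourier_exp_neg_mul_abs hy)
  have hfourier_int : Integrable (𝓕 f) := by
    rw [hfourier]
    exact ((integrable_halfPlanePoissonKernel hy.le).const_mul _).ofReal
  have hinv : 𝓕⁻ (𝓕 f) (ξ / (2 * Real.pi)) = f (ξ / (2 * Real.pi)) :=
    congrFun (Continuous.fourierInv_fourier_eq (by fun_prop) hf_int hfourier_int) _
  calc ∫ x : ℝ, exp (I * ξ * x) * halfPlanePoissonKernel y x
      = Real.pi * 𝓕⁻ (𝓕 f) (ξ / (2 * Real.pi)) := by
        rw [Real.fourierInv_eq', hfourier, ← integral_const_mul]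
        congr 1 with x
        have := Real.pi_ne_zero
        simp only [RCLike.inner_apply, conj_trivial, smul_eq_mul]
        push_cast
        field_simp
    _ = ((Real.pi * Real.exp (-|ξ| * y) : ℝ) : ℂ) := by
        have := Real.pi_pos
        rw [hinv]
        simp only [hf]
        rw [abs_div, abs_of_pos (mul_pos two_pos this)]
        push_cast
        field_simp

variable {E : Type*} [NormedAddCommGroup E] {w : ℝ → E}

theorem integrable_prod_halfPlanePoissonKernel_smul [NormedSpace ℝ E]
    (hw : IntegrableOn w (Ioi 0)) :
    Integrable (fun p : ℝ × ℝ => halfPlanePoissonKernel p.2 p.1 • w p.2)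
      (volume.prod (volume.restrict (Ioi 0))) := by
  have hkernel : Measurable fun p : ℝ × ℝ => halfPlanePoissonKernel p.2 p.1 := by
    unfold halfPlanePoissonKernel
    fun_prop
  have hmeas : AEStronglyMeasurable (fun p : ℝ × ℝ => halfPlanePoissonKernel p.2 p.1 • w p.2)
      (volume.prod (volume.restrict (Ioi 0))) :=
    hkernel.aestronglyMeasurable.smul hw.aestronglyMeasurable.comp_snd
  refine (integrable_prod_iff' hmeas).mpr ⟨?_, ?_⟩
  · filter_upwards [ae_restrict_mem measurableSet_Ioi] with y hy
    exact (integrable_halfPlanePoissonKernel (le_of_lt hy)).smul_const (w y)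
  · refine (hw.norm.const_mul Real.pi).congr ?_
    filter_upwards [ae_restrict_mem measurableSet_Ioi] with y hy
    simp only [norm_smul, Real.norm_of_nonneg (halfPlanePoissonKernel_nonneg (le_of_lt hy) _),
      integral_mul_const, integral_halfPlanePoissonKernel hy]

theorem integrable_integral_halfPlanePoissonKernel_smul [NormedSpace ℝ E]
    (hw : IntegrableOn w (Ioi 0)) :
    Integrable fun x => ∫ y in Ioi 0, halfPlanePoissonKernel y x • w y :=
  (integrable_prod_halfPlanePoissonKernel_smul hw).integral_prod_left

theorem integral_exp_smul_integral_halfPlanePoissonKernel_smul [NormedSpace ℂ E] [CompleteSpace E]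
    (hw : IntegrableOn w (Ioi 0)) (ξ : ℝ) :
    ∫ x : ℝ, exp (I * ξ * x) • ∫ y in Ioi 0, halfPlanePoissonKernel y x • w y =
      Real.pi • laplaceTransform w |ξ| := by
  have hint : Integrable (Function.uncurry fun x y : ℝ =>
      exp (I * ξ * x) • halfPlanePoissonKernel y x • w y)
      (volume.prod (volume.restrict (Ioi 0))) := by
    refine (integrable_prod_halfPlanePoissonKernel_smul hw).bdd_smul 1
      (φ := fun p : ℝ × ℝ => exp (I * ξ * p.1)) (by fun_prop) (ae_of_all _ fun p => ?_)
    rw [mul_assoc, ← ofReal_mul, norm_exp_I_mul_ofReal]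
  have hpull (x : ℝ) := integral_smul (μ := volume.restrict (Ioi 0)) (exp (I * ξ * x))
    fun y => halfPlanePoissonKernel y x • w y
  simp only [← hpull]
  rw [integral_integral_swap hint, laplaceTransform, ← integral_smul]
  refine setIntegral_congr_fun measurableSet_Ioi fun y hy => ?_
  calc ∫ x : ℝ, exp (I * ξ * x) • halfPlanePoissonKernel y x • w y
      = (∫ x : ℝ, exp (I * ξ * x) * halfPlanePoissonKernel y x) • w y := by
        rw [← integral_smul_const]
        simp only [mul_smul, Complex.coe_smul]
    _ = Real.pi • Real.exp (-|ξ| * y) • w y := by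
        rw [integral_exp_mul_halfPlanePoissonKernel hy, Complex.coe_smul, mul_smul]

end PoissonKernelFourier

section Tker

open Set

theorem re_sinCosIntegralAux {x : ℝ} (hx : 0 < x) :
    (sinCosIntegralAux x).re =
      ∫ s in Ioi 0, halfPlanePoissonKernel s 1 * Real.exp (-x * s) := by
  refine (integral_re (laplaceConvergent_inv_ofReal_sub_I hx)).symm.trans ?_
  congr 1 with s
  have hnormSq : Complex.normSq (s - Complex.I) = 1 ^ 2 + s ^ 2 := by
    simp [Complex.normSq_apply, sq, add_comm]
  rw [RCLike.re_to_complex, Complex.smul_re, Complex.inv_re, hnormSq, Complex.sub_re,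
    Complex.ofReal_re, Complex.I_re, sub_zero, smul_eq_mul, mul_comm, halfPlanePoissonKernel]

theorem Tker_eq_neg_integral_halfPlanePoissonKernel {a x : ℝ} (ha : 0 < a) (hx : x ≠ 0) :
    Tker a x = -∫ y in Ioi 0, halfPlanePoissonKernel y x * Real.exp (-a * y) := by
  have hx' : 0 < |x| := abs_pos.mpr hx
  have hscale (s : ℝ) : halfPlanePoissonKernel s 1 * Real.exp (-(a * |x|) * s) =
      |x| * (halfPlanePoissonKernel (|x| * s) x * Real.exp (-a * (|x| * s))) := by
    have hP := halfPlanePoissonKernel_mul_mul hx'.ne' s 1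
    rw [mul_one, halfPlanePoissonKernel_abs] at hP
    rw [hP, ← mul_assoc, mul_inv_cancel_left₀ hx'.ne']
    ring_nf
  rw [Tker_eq_neg_re_sinCosIntegralAux ha hx, re_sinCosIntegralAux (mul_pos ha hx')]
  simp_rw [hscale]
  rw [integral_const_mul, ← smul_eq_mul, integral_comp_mul_left_Ioi'
    (fun y => halfPlanePoissonKernel y x * Real.exp (-a * y)) 0 hx', mul_zero]

theorem Tker_ae_eq_neg_integral_halfPlanePoissonKernel {a : ℝ} (ha : 0 < a) :
    Tker a =ᵐ[volume] fun x => -∫ y in Ioi 0, halfPlanePoissonKernel y x * Real.exp (-a * y) := by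
  filter_upwards [Measure.ae_ne volume 0] with x hx
    using Tker_eq_neg_integral_halfPlanePoissonKernel ha hx

theorem integrable_Tker {a : ℝ} (ha : 0 < a) : Integrable (Tker a) :=
  (integrable_integral_halfPlanePoissonKernel_smul
    (integrableOn_exp_mul_Ioi (neg_lt_zero.mpr ha) 0)).neg.congr
      (Tker_ae_eq_neg_integral_halfPlanePoissonKernel ha).symm

end Tker

/-- `T_a` is integrable and its Fourier transform
`∫ T_a(x) e^{iξx} dx` equals `-π/(|ξ|+a)`. -/
theorem stmt5 (a : ℝ) (ha : 0 < a) :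
    Integrable (fun x : ℝ => Tker a x) ∧
      ∀ ξ : ℝ, (∫ x : ℝ, (Tker a x : ℂ) * Complex.exp (Complex.I * ξ * x))
        = -(Real.pi : ℂ) / ((|ξ| : ℝ) + a) := by
  refine ⟨integrable_Tker ha, fun ξ => ?_⟩
  have hw : IntegrableOn (fun y : ℝ => Real.exp (-a * y) • (1 : ℂ)) (Set.Ioi 0) :=
    (integrableOn_exp_mul_Ioi (neg_lt_zero.mpr ha) 0).smul_const 1
  calc ∫ x : ℝ, (Tker a x : ℂ) * Complex.exp (Complex.I * ξ * x)
      = -∫ x : ℝ, Complex.exp (Complex.I * ξ * x) •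
          ∫ y in Set.Ioi 0, halfPlanePoissonKernel y x • Real.exp (-a * y) • (1 : ℂ) := by
        rw [← integral_neg]
        refine integral_congr_ae ?_
        filter_upwards [Tker_ae_eq_neg_integral_halfPlanePoissonKernel ha] with x hx
        simp only [Complex.real_smul, smul_eq_mul, mul_one, ← Complex.ofReal_mul]
        rw [hx, integral_complex_ofReal, Complex.ofReal_neg, neg_mul, mul_comm]
    _ = -(Real.pi • laplaceTransform (fun y => Real.exp (-a * y) • (1 : ℂ)) |ξ|) := by
        rw [integral_exp_smul_integral_halfPlanePoissonKernel_smul hw]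
    _ = -(Real.pi : ℂ) / ((|ξ| : ℝ) + a) := by
        rw [laplaceTransform_exp_neg_mul_smul, laplaceTransform_const _ (by positivity)]
        simp only [Complex.real_smul, mul_one, Complex.ofReal_inv, Complex.ofReal_add]
        rw [← div_eq_mul_inv, neg_div]
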